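/- Let M = (M,τ,ℓ) be a minimal Markov chain with initial state m0 and let k ≥ 1. Then there exists a Markov chain N with at most k states such that d₁(M,N) < 1 if and only if the underlying labelled directed graph G(M) has a bottom strongly connected component G' = (V,E') and a path m0…m_h such that, for some 0 ≤ p ≤ h, the suffix m_p…m_h is reflected in G' and |{ℓ(m_i) : i < p}| + |V| ≤ k. -/

import Mathlib

open Finset

def IsDist {X : Type*} [Fintype X] (μ : X → ℝ) : Prop :=
  (∀ x, 0 ≤ μ x) ∧ ∑ x, μ x = 1

def IsCoupling {X : Type*} [Fintype X] (μ ν : X → ℝ) (ω : X × X → ℝ) : Prop :=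
  IsDist ω ∧ (∀ x, ∑ y, ω (x, y) = μ x) ∧ (∀ y, ∑ x, ω (x, y) = ν y)

noncomputable def kant {X : Type*} [Fintype X] (d : X → X → ℝ) (μ ν : X → ℝ) : ℝ :=
  sInf { c | ∃ ω : X × X → ℝ, IsCoupling μ ν ω ∧ c = ∑ p : X × X, d p.1 p.2 * ω p }

open Classical in
noncomputable def psi {S L : Type*} [Fintype S] (lam : ℝ) (T : S → S → ℝ) (lab : S → L)
    (d : S → S → ℝ) : S → S → ℝ :=
  fun s t => if lab s = lab t then lam * kant d (T s) (T t) else 1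

noncomputable def bdist {S L : Type*} [Fintype S] (lam : ℝ) (T : S → S → ℝ) (lab : S → L) :
    S → S → ℝ := fun s t =>
  sInf { r | ∃ d : S → S → ℝ, (∀ a b, 0 ≤ d a b ∧ d a b ≤ 1) ∧
      (∀ a b, psi lam T lab d a b ≤ d a b) ∧ r = d s t }

def sumT {M N : Type*} (τ : M → M → ℝ) (θ : N → N → ℝ) : M ⊕ N → M ⊕ N → ℝ
  | Sum.inl m, Sum.inl m' => τ m m'
  | Sum.inr n, Sum.inr n' => θ n n'
  | _, _ => 0

def sumL {M N L : Type*} (ℓ : M → L) (α : N → L) : M ⊕ N → L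
  | Sum.inl m => ℓ m
  | Sum.inr n => α n

lemma prod_coupling {X : Type*} [Fintype X] {μ ν : X → ℝ} (hμ : IsDist μ) (hν : IsDist ν) :
    IsCoupling μ ν (fun p => μ p.1 * ν p.2) := by
  have h1 : ∀ x, ∑ y, μ x * ν y = μ x := fun x => by rw [← Finset.mul_sum, hν.2, mul_one]
  refine ⟨⟨fun p => mul_nonneg (hμ.1 _) (hν.1 _), ?_⟩, h1, ?_⟩
  · rw [Fintype.sum_prod_type]
    simp only [h1, hμ.2]
  · intro y
    simp only
    rw [← Finset.sum_mul, hμ.2, one_mul]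

lemma kant_le {X : Type*} [Fintype X] {d : X → X → ℝ} (hd : ∀ a b, 0 ≤ d a b)
    {μ ν : X → ℝ} {ω : X × X → ℝ} (hω : IsCoupling μ ν ω) :
    kant d μ ν ≤ ∑ p : X × X, d p.1 p.2 * ω p := by
  apply csInf_le
  · refine ⟨0, ?_⟩
    rintro c ⟨ω', h', rfl⟩
    exact Finset.sum_nonneg fun p _ => mul_nonneg (hd _ _) (h'.1.1 p)
  · exact ⟨ω, hω, rfl⟩

lemma le_kant {X : Type*} [Fintype X] {d : X → X → ℝ}
    {μ ν : X → ℝ} (hμ : IsDist μ) (hν : IsDist ν) {c : ℝ}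
    (h : ∀ ω, IsCoupling μ ν ω → c ≤ ∑ p : X × X, d p.1 p.2 * ω p) :
    c ≤ kant d μ ν := by
  apply le_csInf
  · exact ⟨_, _, prod_coupling hμ hν, rfl⟩
  · rintro c ⟨ω', h', rfl⟩
    exact h _ h'

lemma kant_mono {X : Type*} [Fintype X] {d e : X → X → ℝ} (hd : ∀ a b, 0 ≤ d a b)
    (hde : ∀ a b, d a b ≤ e a b)
    {μ ν : X → ℝ} (hμ : IsDist μ) (hν : IsDist ν) : kant d μ ν ≤ kant e μ ν := by
  apply le_kant hμ hν
  intro ω hω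
  refine (kant_le hd hω).trans (Finset.sum_le_sum fun p _ => ?_)
  exact mul_le_mul_of_nonneg_right (hde _ _) (hω.1.1 p)

lemma psi_eq {S L : Type*} [Fintype S] (T : S → S → ℝ) (lab : S → L) (d : S → S → ℝ)
    {s t : S} (h : lab s = lab t) : psi 1 T lab d s t = kant d (T s) (T t) := by
  simp [psi, h]

lemma psi_ne {S L : Type*} [Fintype S] (T : S → S → ℝ) (lab : S → L) (d : S → S → ℝ)
    {s t : S} (h : lab s ≠ lab t) : psi 1 T lab d s t = 1 := by
  simp [psi, h]

lemma psi_mono {S L : Type*} [Fintype S] {T : S → S → ℝ} (hT : ∀ s, IsDist (T s)) (lab : S → L)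
    {d e : S → S → ℝ} (hd : ∀ a b, 0 ≤ d a b) (hde : ∀ a b, d a b ≤ e a b) (s t : S) :
    psi 1 T lab d s t ≤ psi 1 T lab e s t := by
  by_cases h : lab s = lab t
  · rw [psi_eq _ _ _ h, psi_eq _ _ _ h]
    exact kant_mono hd hde (hT s) (hT t)
  · rw [psi_ne _ _ _ h, psi_ne _ _ _ h]

lemma psi_nonneg {S L : Type*} [Fintype S] {T : S → S → ℝ} (hT : ∀ s, IsDist (T s)) (lab : S → L)
    {d : S → S → ℝ} (hd : ∀ a b, 0 ≤ d a b) (s t : S) :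
    0 ≤ psi 1 T lab d s t := by
  by_cases h : lab s = lab t
  · rw [psi_eq _ _ _ h]
    exact le_kant (hT s) (hT t) fun ω hω =>
      Finset.sum_nonneg fun p _ => mul_nonneg (hd _ _) (hω.1.1 p)
  · rw [psi_ne _ _ _ h]
    exact zero_le_one

lemma psi_one_le {S L : Type*} [Fintype S] {T : S → S → ℝ} (hT : ∀ s, IsDist (T s)) (lab : S → L)
    {d : S → S → ℝ} (hd : ∀ a b, 0 ≤ d a b) (hd1 : ∀ a b, d a b ≤ 1) (s t : S) :
    psi 1 T lab d s t ≤ 1 := by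
  by_cases h : lab s = lab t
  · rw [psi_eq _ _ _ h]
    have hc := prod_coupling (hT s) (hT t)
    refine (kant_le hd hc).trans ?_
    rw [← hc.1.2]
    exact Finset.sum_le_sum fun p _ => mul_le_of_le_one_left (hc.1.1 p) (hd1 _ _)
  · rw [psi_ne _ _ _ h]

lemma bdist_le {S L : Type*} [Fintype S] {T : S → S → ℝ} {lab : S → L}
    {d : S → S → ℝ} (hd : ∀ a b, 0 ≤ d a b ∧ d a b ≤ 1)
    (hp : ∀ a b, psi 1 T lab d a b ≤ d a b) (s t : S) : bdist 1 T lab s t ≤ d s t := by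
  apply csInf_le
  · refine ⟨0, ?_⟩
    rintro c ⟨d', h', _, rfl⟩
    exact (h' _ _).1
  · exact ⟨d, hd, hp, rfl⟩

lemma le_bdist {S L : Type*} [Fintype S] {T : S → S → ℝ} (hT : ∀ s, IsDist (T s)) {lab : S → L}
    {s t : S} {c : ℝ}
    (h : ∀ d : S → S → ℝ, (∀ a b, 0 ≤ d a b ∧ d a b ≤ 1) →
      (∀ a b, psi 1 T lab d a b ≤ d a b) → c ≤ d s t) : c ≤ bdist 1 T lab s t := by
  apply le_csInf
  · exact ⟨1, fun _ _ => 1, fun _ _ => ⟨zero_le_one, le_rfl⟩,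
      fun a b => psi_one_le hT lab (fun _ _ => zero_le_one) (fun _ _ => le_rfl) a b, rfl⟩
  · rintro c ⟨d', h', h2, rfl⟩
    exact h _ h' h2

lemma bdist_mem {S L : Type*} [Fintype S] {T : S → S → ℝ} (hT : ∀ s, IsDist (T s)) (lab : S → L)
    (s t : S) : 0 ≤ bdist 1 T lab s t ∧ bdist 1 T lab s t ≤ 1 := by
  constructor
  · exact le_bdist hT fun d hd _ => (hd _ _).1
  · exact bdist_le (d := fun _ _ => 1) (fun _ _ => ⟨zero_le_one, le_rfl⟩)
      (fun a b => psi_one_le hT lab (fun _ _ => zero_le_one) (fun _ _ => le_rfl) a b) s t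

lemma bdist_fix {S L : Type*} [Fintype S] {T : S → S → ℝ} (hT : ∀ s, IsDist (T s)) (lab : S → L)
    (s t : S) : psi 1 T lab (bdist 1 T lab) s t = bdist 1 T lab s t := by
  have h0 : ∀ s t, 0 ≤ bdist 1 T lab s t := fun s t => (bdist_mem hT lab s t).1
  have h1 : ∀ s t, bdist 1 T lab s t ≤ 1 := fun s t => (bdist_mem hT lab s t).2
  have hle : ∀ s t, psi 1 T lab (bdist 1 T lab) s t ≤ bdist 1 T lab s t := by
    intro s t
    apply le_bdist hT
    intro d hd hp
    exact (psi_mono hT lab h0 (fun a b => bdist_le hd hp a b) s t).trans (hp s t)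
  refine le_antisymm (hle s t) ?_
  exact bdist_le (fun a b => ⟨psi_nonneg hT lab h0 a b, psi_one_le hT lab h0 h1 a b⟩)
    (fun a b => psi_mono hT lab (psi_nonneg hT lab h0) hle a b) s t

lemma bdist_lab {S L : Type*} [Fintype S] {T : S → S → ℝ} (hT : ∀ s, IsDist (T s)) {lab : S → L}
    {s t : S} (h : bdist 1 T lab s t < 1) : lab s = lab t := by
  by_contra hne
  rw [← bdist_fix hT, psi_ne _ _ _ hne] at h
  exact lt_irrefl _ h

lemma coupling_pos {X : Type*} [Fintype X] {μ ν : X → ℝ} {ω : X × X → ℝ}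
    (hω : IsCoupling μ ν ω) {p : X × X} (hp : ω p ≠ 0) : 0 < μ p.1 ∧ 0 < ν p.2 := by
  have h0 : 0 < ω p := lt_of_le_of_ne (hω.1.1 p) (Ne.symm hp)
  constructor
  · rw [← hω.2.1]
    exact h0.trans_le (Finset.single_le_sum (f := fun y => ω (p.1, y))
      (fun y _ => hω.1.1 _) (Finset.mem_univ p.2))
  · rw [← hω.2.2]
    exact h0.trans_le (Finset.single_le_sum (f := fun y => ω (y, p.2))
      (fun y _ => hω.1.1 _) (Finset.mem_univ p.1))

/-- one backward step of distance smaller than one -/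
lemma bdist_step {S L : Type*} [Fintype S] {T : S → S → ℝ} (hT : ∀ s, IsDist (T s)) {lab : S → L}
    {s t s' t' : S} (hl : lab s = lab t) (hs : 0 < T s s') (ht : 0 < T t t')
    (h : bdist 1 T lab s' t' < 1) : bdist 1 T lab s t < 1 := by
  rw [← bdist_fix hT, psi_eq _ _ _ hl]
  have hc := prod_coupling (hT s) (hT t)
  refine (kant_le (fun a b => (bdist_mem hT lab a b).1) hc).trans_lt ?_
  refine lt_of_lt_of_eq ?_ hc.1.2
  apply Finset.sum_lt_sum
  · exact fun p _ => mul_le_of_le_one_left (hc.1.1 p) (bdist_mem hT lab _ _).2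
  · refine ⟨(s', t'), Finset.mem_univ _, ?_⟩
    have : 0 < T s s' * T t t' := mul_pos hs ht
    simp only
    nlinarith

lemma exists_pos_min {X : Type*} [Fintype X] (f : X → ℝ) :
    ∃ δ : ℝ, 0 < δ ∧ ∀ x, 0 < f x → δ ≤ f x := by
  classical
  by_cases hne : (Finset.univ.filter fun x => 0 < f x).Nonempty
  · obtain ⟨x, hx, hmin⟩ := Finset.exists_min_image _ f hne
    exact ⟨f x, (Finset.mem_filter.1 hx).2,
      fun y hy => hmin y (Finset.mem_filter.2 ⟨Finset.mem_univ _, hy⟩)⟩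
  · refine ⟨1, one_pos, fun x hx => (hne ⟨x, by simpa using hx⟩).elim⟩

/-- distance below one: a synchronous path leads to a pair at distance zero -/
lemma exists_zero {S L : Type*} [Fintype S] {T : S → S → ℝ} (hT : ∀ s, IsDist (T s)) {lab : S → L}
    {s t : S} (h : bdist 1 T lab s t < 1) :
    ∃ s' t', Relation.ReflTransGen (fun a b : S × S => 0 < T a.1 b.1 ∧ 0 < T a.2 b.2 ∧
      lab a.1 = lab a.2) (s, t) (s', t') ∧ bdist 1 T lab s' t' = 0 := by
  classical
  set r := fun a b : S × S => 0 < T a.1 b.1 ∧ 0 < T a.2 b.2 ∧ lab a.1 = lab a.2 with hr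
  set d := bdist 1 T lab with hd
  have d0 : ∀ a b, 0 ≤ d a b := fun a b => (bdist_mem hT lab a b).1
  have d1 : ∀ a b, d a b ≤ 1 := fun a b => (bdist_mem hT lab a b).2
  let Z : S → S → Prop := fun a b => ∃ s' t', Relation.ReflTransGen r (a, b) (s', t') ∧ d s' t' = 0
  by_contra hZ
  change ¬ Z s t at hZ
  have hpos : ∀ a b, ¬ Z a b → 0 < d a b := by
    intro a b hab
    refine lt_of_le_of_ne (d0 a b) fun h0 => hab ⟨a, b, Relation.ReflTransGen.refl, h0.symm⟩
  obtain ⟨δ, hδ, hδ'⟩ := exists_pos_min (fun p : S × S => d p.1 p.2)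
  have hst : δ ≤ d s t := hδ' (s, t) (hpos _ _ hZ)
  have hδ1 : δ < 1 := hst.trans_lt h
  -- the scaling factor
  set c : ℝ := 1 / (1 - δ) with hcdef
  have hc1 : 1 < c := by
    rw [hcdef, lt_div_iff₀ (by linarith)]
    linarith
  have hcδ : c * (1 - δ) = 1 := by
    rw [hcdef]
    field_simp
    exact div_self (by linarith)
  let d' : S → S → ℝ := fun a b => if Z a b then d a b else 1 - c * (1 - d a b)
  have d'Z : ∀ a b, Z a b → d' a b = d a b := fun a b hab => if_pos hab
  have d'P : ∀ a b, ¬ Z a b → d' a b = 1 - c * (1 - d a b) := fun a b hab => if_neg hab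
  have hd'd : ∀ a b, d' a b ≤ d a b := by
    intro a b
    by_cases hab : Z a b
    · rw [d'Z _ _ hab]
    · rw [d'P _ _ hab]
      nlinarith [d1 a b]
  have hd'0 : ∀ a b, 0 ≤ d' a b := by
    intro a b
    by_cases hab : Z a b
    · rw [d'Z _ _ hab]
      exact d0 a b
    · rw [d'P _ _ hab]
      have : δ ≤ d a b := hδ' (a, b) (hpos _ _ hab)
      nlinarith
  have key : d s t ≤ d' s t := by
    refine bdist_le (fun a b => ⟨hd'0 a b, (hd'd a b).trans (d1 a b)⟩) ?_ s t
    intro a b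
    by_cases hab : Z a b
    · rw [d'Z _ _ hab]
      exact (psi_mono hT lab hd'0 hd'd a b).trans_eq (bdist_fix hT lab a b)
    · by_cases hl : lab a = lab b
      · rw [psi_eq _ _ _ hl]
        have hfix : d a b = kant d (T a) (T b) := by
          rw [← psi_eq _ _ _ hl]
          exact (bdist_fix hT lab a b).symm
        rw [d'P _ _ hab]
        have hk : 1 - (1 - kant d' (T a) (T b)) / c ≤ kant d (T a) (T b) := by
          apply le_kant (hT a) (hT b)
          intro ω hω
          have h1 := kant_le hd'0 hω
          have h2 : ∑ p : S × S, d' p.1 p.2 * ω p = 1 - c * (1 - ∑ p : S × S, d p.1 p.2 * ω p) := by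
            have : ∀ p : S × S, d' p.1 p.2 * ω p = ω p - c * (ω p - d p.1 p.2 * ω p) := by
              intro p
              by_cases hp : ω p = 0
              · simp [hp]
              · obtain ⟨ha, hb⟩ := coupling_pos hω hp
                have : ¬ Z p.1 p.2 := by
                  rintro ⟨s', t', h1, h2⟩
                  exact hab ⟨s', t', Relation.ReflTransGen.head ⟨ha, hb, hl⟩ h1, h2⟩
                rw [d'P _ _ this]
                ring
            rw [Finset.sum_congr rfl fun p _ => this p, Finset.sum_sub_distrib, ← Finset.mul_sum,
              Finset.sum_sub_distrib, hω.1.2]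
          rw [h2] at h1
          rw [sub_le_comm, le_div_iff₀ (by linarith)]
          linarith
        rw [← hfix, sub_le_comm, le_div_iff₀ (by linarith)] at hk
        linarith
      · have : d a b = 1 := by
          rw [hd, ← bdist_fix hT, psi_ne _ _ _ hl]
        rw [psi_ne _ _ _ hl, d'P _ _ hab, this]
        simp
  rw [d'P _ _ hZ] at key
  nlinarith

/-- sets closed under distance zero get the same mass -/
lemma zero_mass {S L : Type*} [Fintype S] {T : S → S → ℝ} (hT : ∀ s, IsDist (T s)) {lab : S → L}
    {s t : S} (h : bdist 1 T lab s t = 0) (C : Set S)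
    (hC : ∀ a b, bdist 1 T lab a b = 0 → (a ∈ C ↔ b ∈ C)) :
    ∑ v, C.indicator (T s) v = ∑ v, C.indicator (T t) v := by
  classical
  have hl := bdist_lab hT (h.trans_lt one_pos)
  obtain ⟨δ, hδ, hδ'⟩ := exists_pos_min (fun p : S × S => bdist 1 T lab p.1 p.2)
  have hk : kant (bdist 1 T lab) (T s) (T t) = 0 := by
    rw [← psi_eq _ _ _ hl, bdist_fix hT, h]
  have : δ * |∑ v, C.indicator (T s) v - ∑ v, C.indicator (T t) v| ≤ 0 := by
    rw [← hk]
    apply le_kant (hT s) (hT t)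
    intro ω hω
    have e1 : ∑ v, C.indicator (T s) v = ∑ p : S × S, (if p.1 ∈ C then 1 else 0) * ω p := by
      rw [Fintype.sum_prod_type]
      refine Finset.sum_congr rfl fun x _ => ?_
      rw [Set.indicator_apply, ← hω.2.1]
      by_cases hx : x ∈ C <;> simp [hx]
    have e2 : ∑ v, C.indicator (T t) v = ∑ p : S × S, (if p.2 ∈ C then 1 else 0) * ω p := by
      rw [Fintype.sum_prod_type_right]
      refine Finset.sum_congr rfl fun x _ => ?_
      rw [Set.indicator_apply, ← hω.2.2]
      by_cases hx : x ∈ C <;> simp [hx]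
    rw [e1, e2, ← Finset.sum_sub_distrib]
    calc _ ≤ δ * ∑ p : S × S, |(if p.1 ∈ C then 1 else 0) * ω p - (if p.2 ∈ C then 1 else 0) * ω p| :=
          mul_le_mul_of_nonneg_left (Finset.abs_sum_le_sum_abs _ _) hδ.le
      _ ≤ _ := by
        rw [Finset.mul_sum]
        refine Finset.sum_le_sum fun p _ => ?_
        rw [← sub_mul, abs_mul, abs_of_nonneg (hω.1.1 p), ← mul_assoc]
        refine mul_le_mul_of_nonneg_right ?_ (hω.1.1 p)
        have h0 := (bdist_mem hT lab p.1 p.2).1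
        rcases h0.eq_or_lt with h0 | h0
        · have := hC _ _ h0.symm
          rw [← h0]
          simp [this]
        · have := hδ' p h0
          split_ifs <;> simp <;> linarith
  have h2 : |∑ v, C.indicator (T s) v - ∑ v, C.indicator (T t) v| ≤ 0 := by
    by_contra hcon
    push Not at hcon
    nlinarith [mul_pos hδ hcon]
  have := abs_nonpos_iff.1 h2
  linarith

lemma eqv_bisim {S L : Type*} [Fintype S] {T : S → S → ℝ} (hT : ∀ s, IsDist (T s)) {lab : S → L}
    {s t : S} (h : Relation.EqvGen (fun a b => bdist 1 T lab a b = 0) s t) :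
    lab s = lab t ∧ ∀ u : S,
      ∑ v, Set.indicator {w | Relation.EqvGen (fun a b => bdist 1 T lab a b = 0) u w} (T s) v
       = ∑ v, Set.indicator {w | Relation.EqvGen (fun a b => bdist 1 T lab a b = 0) u w} (T t) v := by
  suffices H : ∀ s t, Relation.EqvGen (fun a b => bdist 1 T lab a b = 0) s t →
      lab s = lab t ∧ ∀ C : Set S, (∀ a b, bdist 1 T lab a b = 0 → (a ∈ C ↔ b ∈ C)) →
      ∑ v, C.indicator (T s) v = ∑ v, C.indicator (T t) v by
    refine ⟨(H s t h).1, fun u => (H s t h).2 _ ?_⟩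
    intro a b hab
    exact ⟨fun h => Relation.EqvGen.trans _ _ _ h (Relation.EqvGen.rel _ _ hab),
      fun h => Relation.EqvGen.trans _ _ _ h (Relation.EqvGen.symm _ _ (Relation.EqvGen.rel _ _ hab))⟩
  intro s t h
  induction h with
  | rel x y h => exact ⟨bdist_lab hT (h.trans_lt one_pos), fun C hC => zero_mass hT h C hC⟩
  | refl x => exact ⟨rfl, fun _ _ => rfl⟩
  | symm x y _ ih => exact ⟨ih.1.symm, fun C hC => (ih.2 C hC).symm⟩
  | trans x y z _ _ ih1 ih2 =>
    exact ⟨ih1.1.trans ih2.1, fun C hC => (ih1.2 C hC).trans (ih2.2 C hC)⟩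

lemma eqv_lift {S L : Type*} [Fintype S] {T : S → S → ℝ} (hT : ∀ s, IsDist (T s)) {lab : S → L}
    {s t s' : S} (h : Relation.EqvGen (fun a b => bdist 1 T lab a b = 0) s t) (hs : 0 < T s s') :
    ∃ t', 0 < T t t' ∧ Relation.EqvGen (fun a b => bdist 1 T lab a b = 0) s' t' := by
  have h2 := (eqv_bisim hT h).2 s'
  by_contra hcon
  push Not at hcon
  have hz : ∑ v, Set.indicator {w | Relation.EqvGen (fun a b => bdist 1 T lab a b = 0) s' w} (T t) v
      ≤ 0 := by
    refine Finset.sum_nonpos fun v _ => ?_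
    by_cases hv : v ∈ {w | Relation.EqvGen (fun a b => bdist 1 T lab a b = 0) s' w}
    · rw [Set.indicator_of_mem hv]
      by_contra hlt
      push Not at hlt
      exact hcon v hlt hv
    · rw [Set.indicator_of_notMem hv]
  rw [← h2] at hz
  have := Finset.single_le_sum
    (f := fun v => Set.indicator {w | Relation.EqvGen (fun a b => bdist 1 T lab a b = 0) s' w} (T s) v)
    (fun v _ => Set.indicator_nonneg (fun x _ => (hT s).1 x) v) (Finset.mem_univ s')
  have hm : s' ∈ {w | Relation.EqvGen (fun a b => bdist 1 T lab a b = 0) s' w} :=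
    Relation.EqvGen.refl s'
  simp only [Set.indicator_of_mem hm] at this
  linarith

lemma sumT_dist {M N : Type*} [Fintype M] [Fintype N] {τ : M → M → ℝ} {θ : N → N → ℝ}
    (hτ : ∀ m, IsDist (τ m)) (hθ : ∀ m, IsDist (θ m)) (s : M ⊕ N) : IsDist (sumT τ θ s) := by
  rcases s with m | n
  · refine ⟨?_, ?_⟩
    · rintro (x | x) <;> simp [sumT, (hτ m).1]
    · simp [Fintype.sum_sum_type, sumT, (hτ m).2]
  · refine ⟨?_, ?_⟩
    · rintro (x | x) <;> simp [sumT, (hθ n).1]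
    · simp [Fintype.sum_sum_type, sumT, (hθ n).2]

lemma rtg_path {X : Type*} {r : X → X → Prop} {a b : X} (h : Relation.ReflTransGen r a b) :
    ∃ (n : ℕ) (p : ℕ → X), p 0 = a ∧ p n = b ∧ ∀ i < n, r (p i) (p (i + 1)) := by
  induction h using Relation.ReflTransGen.head_induction_on with
  | refl => exact ⟨0, fun _ => b, rfl, rfl, by simp⟩
  | head hac hcb ih =>
    rename_i x y
    obtain ⟨n, p, h0, hn, hp⟩ := ih
    refine ⟨n + 1, fun i => Nat.casesOn i x p, rfl, hn, ?_⟩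
    intro i hi
    cases i with
    | zero => simpa [h0] using hac
    | succ j => exact hp j (by omega)

lemma exists_bscc {M : Type*} [Fintype M] (r : M → M → Prop) (m : M) :
    ∃ V : Finset M, V.Nonempty ∧ (∀ u ∈ V, ∀ v, r u v → v ∈ V) ∧
      (∀ u ∈ V, ∀ v ∈ V, Relation.ReflTransGen r u v) ∧
      ∀ u ∈ V, Relation.ReflTransGen r m u := by
  classical
  let rc : M → Finset M := fun x => Finset.univ.filter fun y => Relation.ReflTransGen r x y
  have hrc : ∀ x y, y ∈ rc x ↔ Relation.ReflTransGen r x y := fun x y => by simp [rc]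
  obtain ⟨x, hx, hmin⟩ := Finset.exists_min_image (rc m) (fun y => (rc y).card)
    ⟨m, (hrc _ _).2 Relation.ReflTransGen.refl⟩
  rw [hrc] at hx
  refine ⟨rc x, ⟨x, (hrc _ _).2 Relation.ReflTransGen.refl⟩, ?_, ?_, ?_⟩
  · intro u hu v huv
    rw [hrc] at hu ⊢
    exact hu.tail huv
  · intro u hu v hv
    have hu' := (hrc _ _).1 hu
    have hsub : rc u ⊆ rc x := fun y hy => (hrc _ _).2 (hu'.trans ((hrc _ _).1 hy))
    have := Finset.eq_of_subset_of_card_le hsub (hmin u ((hrc _ _).2 (hx.trans hu')))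
    rw [← this] at hv
    exact (hrc _ _).1 hv
  · intro u hu
    exact hx.trans ((hrc _ _).1 hu)

lemma push_zero {M N L : Type*} [Fintype M] [Fintype N] {τ : M → M → ℝ} {θ : N → N → ℝ}
    (hτ : ∀ m, IsDist (τ m)) (hθ : ∀ m, IsDist (θ m)) {ℓ : M → L} {α : N → L} (V : Finset M)
    (hV : ∀ u ∈ V, ∀ v, 0 < τ u v → v ∈ V) (f : M → N) (hα : ∀ v ∈ V, α (f v) = ℓ v)
    [DecidableEq N]
    (hf : ∀ v ∈ V, ∀ b, θ (f v) b = ∑ a, if b = f a then τ v a else 0) (v : M) (hv : v ∈ V) :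
    bdist 1 (sumT τ θ) (sumL ℓ α) (Sum.inl v) (Sum.inr (f v)) = 0 := by
  classical
  have hT := sumT_dist hτ hθ
  let Q : M ⊕ N → M ⊕ N → Prop := fun s t => ∃ v ∈ V, s = Sum.inl v ∧ t = Sum.inr (f v)
  let d : M ⊕ N → M ⊕ N → ℝ := fun s t => if Q s t then 0 else 1
  have hd : ∀ a b, 0 ≤ d a b ∧ d a b ≤ 1 := by
    intro a b
    simp only [d]
    split_ifs <;> simp
  refine le_antisymm ?_ (bdist_mem hT _ _ _).1
  have : d (Sum.inl v) (Sum.inr (f v)) = 0 := if_pos ⟨v, hv, rfl, rfl⟩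
  rw [← this]
  apply bdist_le hd
  intro a b
  by_cases hab : Q a b
  · have : d a b = 0 := if_pos hab
    rw [this]
    obtain ⟨u, hu, rfl, rfl⟩ := hab
    rw [psi_eq _ _ _ (show sumL ℓ α (Sum.inl u) = sumL ℓ α (Sum.inr (f u)) from (hα u hu).symm)]
    let ω : (M ⊕ N) × (M ⊕ N) → ℝ := fun p => match p with
      | (Sum.inl a, Sum.inr b) => if b = f a then τ u a else 0
      | _ => 0
    have hω0 : ∀ p, 0 ≤ ω p := by
      rintro ⟨a | a, b | b⟩ <;> simp only [ω] <;> try exact le_rfl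
      split_ifs
      · exact (hτ u).1 a
      · exact le_rfl
    have hm1 : ∀ x, ∑ y, ω (x, y) = sumT τ θ (Sum.inl u) x := by
      rintro (x | x) <;> simp [ω, sumT, Fintype.sum_sum_type]
    have hω : IsCoupling (sumT τ θ (Sum.inl u)) (sumT τ θ (Sum.inr (f u))) ω := by
      refine ⟨⟨hω0, ?_⟩, hm1, ?_⟩
      · rw [Fintype.sum_prod_type]
        simp only [hm1]
        exact (hT _).2
      · rintro (x | x)
        · simp [ω, sumT, Fintype.sum_sum_type]
        · simp [ω, sumT, Fintype.sum_sum_type, hf u hu]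
    refine (kant_le (fun a b => (hd a b).1) hω).trans_eq ?_
    apply Finset.sum_eq_zero
    rintro ⟨a | a, b | b⟩ - <;> simp only [ω, mul_zero]
    split_ifs with h
    · by_cases h0 : 0 < τ u a
      · have : d (Sum.inl a) (Sum.inr b) = 0 := if_pos ⟨a, hV u hu a h0, rfl, by rw [h]⟩
        rw [this, zero_mul]
      · have : τ u a = 0 := le_antisymm (not_lt.1 h0) ((hτ u).1 a)
        rw [this, mul_zero]
    · simp
  · have : d a b = 1 := if_neg hab
    rw [this]
    exact psi_one_le hT _ (fun a b => (hd a b).1) (fun a b => (hd a b).2) a b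

lemma path_lt_one {M N L : Type*} [Fintype M] [Fintype N] {τ : M → M → ℝ} {θ : N → N → ℝ}
    (hτ : ∀ m, IsDist (τ m)) (hθ : ∀ m, IsDist (θ m)) {ℓ : M → L} {α : N → L}
    (h : ℕ) (p : ℕ → M) (n : ℕ → N) (hp : ∀ i < h, 0 < τ (p i) (p (i + 1)))
    (hn : ∀ i < h, 0 < θ (n i) (n (i + 1))) (hl : ∀ i < h, ℓ (p i) = α (n i))
    (hend : bdist 1 (sumT τ θ) (sumL ℓ α) (Sum.inl (p h)) (Sum.inr (n h)) < 1) :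
    bdist 1 (sumT τ θ) (sumL ℓ α) (Sum.inl (p 0)) (Sum.inr (n 0)) < 1 := by
  have hT := sumT_dist hτ hθ
  have : ∀ j ≤ h, bdist 1 (sumT τ θ) (sumL ℓ α) (Sum.inl (p (h - j))) (Sum.inr (n (h - j))) < 1 := by
    intro j
    induction j with
    | zero => simpa using hend
    | succ j ih =>
      intro hj
      have e : h - j = h - (j + 1) + 1 := by omega
      have ih := ih (by omega)
      rw [e] at ih
      exact bdist_step hT (s := Sum.inl (p (h - (j + 1)))) (t := Sum.inr (n (h - (j + 1))))
        (s' := Sum.inl (p (h - (j + 1) + 1))) (t' := Sum.inr (n (h - (j + 1) + 1)))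
        (hl _ (by omega)) (hp (h - (j + 1)) (by omega)) (hn (h - (j + 1)) (by omega)) ih
  simpa using this h le_rfl

open Classical in
lemma forward {M L : Type*} [Fintype M] (k : ℕ)
    (τ : M → M → ℝ) (hτ : ∀ m, IsDist (τ m)) (ℓ : M → L) (m0 : M)
    (hmin : ∀ R : M → M → Prop, Equivalence R →
      (∀ m n, R m n → ℓ m = ℓ n ∧
        ∀ u : M, ∑ v : M, Set.indicator {w : M | R u w} (τ m) v
          = ∑ v : M, Set.indicator {w : M | R u w} (τ n) v) →
      ∀ m n, R m n → m = n)
    {N : Type*} [Fintype N] (hNk : Fintype.card N ≤ k) (θ : N → N → ℝ) (α : N → L)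
    (hθ : ∀ i, IsDist (θ i)) (n0 : N)
    (hlt : bdist 1 (sumT τ θ) (sumL ℓ α) (Sum.inl m0) (Sum.inr n0) < 1) :
    (∃ V : Finset M, V.Nonempty ∧
      (∀ u ∈ V, ∀ v : M, 0 < τ u v → v ∈ V) ∧
      (∀ u ∈ V, ∀ v ∈ V, Relation.ReflTransGen (fun a b : M => 0 < τ a b) u v) ∧
      ∃ (h : ℕ) (p : ℕ → M), p 0 = m0 ∧ (∀ i < h, 0 < τ (p i) (p (i + 1))) ∧
        ∃ q ≤ h,
          (∃ p' : ℕ → M,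
            (∀ i, q ≤ i → i ≤ h → p' i ∈ V) ∧
            p' h = p h ∧
            (∀ i, q ≤ i → i < h → 0 < τ (p' i) (p' (i + 1))) ∧
            (∀ i, q ≤ i → i ≤ h → ℓ (p' i) = ℓ (p i))) ∧
          ((Finset.range q).image (fun i => ℓ (p i))).card + V.card ≤ k) := by
  have hT := sumT_dist hτ hθ
  obtain ⟨s', t', hst, hz⟩ := exists_zero hT hlt
  set E : M ⊕ N → M ⊕ N → Prop :=
    Relation.EqvGen (fun a b => bdist 1 (sumT τ θ) (sumL ℓ α) a b = 0) with hE
  have Esymm : ∀ {a b}, E a b → E b a := fun h => Relation.EqvGen.symm _ _ h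
  have Etrans : ∀ {a b c}, E a b → E b c → E a c := fun h h' => Relation.EqvGen.trans _ _ _ h h'
  have Einj : ∀ m m', E (Sum.inl m) (Sum.inl m') → m = m' := by
    apply hmin (fun m m' => E (Sum.inl m) (Sum.inl m'))
    · exact ⟨fun _ => Relation.EqvGen.refl _, Esymm, Etrans⟩
    · intro m m' hmm
      have hb := eqv_bisim hT hmm
      refine ⟨hb.1, fun u => ?_⟩
      have := hb.2 (Sum.inl u)
      rw [Fintype.sum_sum_type, Fintype.sum_sum_type] at this
      simpa [Set.indicator_apply, sumT] using this
  have liftR : ∀ m n m', E (Sum.inl m) (Sum.inr n) → 0 < τ m m' →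
      ∃ n', 0 < θ n n' ∧ E (Sum.inl m') (Sum.inr n') := by
    intro m n m' he hm
    obtain ⟨t', h1, h2⟩ := eqv_lift hT (s' := Sum.inl m') he hm
    rcases t' with x | x
    · simp [sumT] at h1
    · exact ⟨x, h1, h2⟩
  have liftL : ∀ m n n', E (Sum.inl m) (Sum.inr n) → 0 < θ n n' →
      ∃ m', 0 < τ m m' ∧ E (Sum.inl m') (Sum.inr n') := by
    intro m n n' he hm
    obtain ⟨t', h1, h2⟩ := eqv_lift hT (s' := Sum.inr n') (Esymm he) hm
    rcases t' with x | x
    · exact ⟨x, h1, Esymm h2⟩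
    · simp [sumT] at h1
  have Elabel : ∀ m n, E (Sum.inl m) (Sum.inr n) → ℓ m = α n := fun m n h => (eqv_bisim hT h).1
  let r : M × N → M × N → Prop := fun a b => 0 < τ a.1 b.1 ∧ 0 < θ a.2 b.2 ∧ ℓ a.1 = α a.2
  have step1 : ∃ m n, E (Sum.inl m) (Sum.inr n) ∧ Relation.ReflTransGen r (m0, n0) (m, n) := by
    have : ∀ y, Relation.ReflTransGen (fun a b : (M ⊕ N) × (M ⊕ N) => 0 < sumT τ θ a.1 b.1 ∧
        0 < sumT τ θ a.2 b.2 ∧ sumL ℓ α a.1 = sumL ℓ α a.2) (Sum.inl m0, Sum.inr n0) y →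
        ∃ m n, y = (Sum.inl m, Sum.inr n) ∧ Relation.ReflTransGen r (m0, n0) (m, n) := by
      intro y hy
      induction hy with
      | refl => exact ⟨m0, n0, rfl, Relation.ReflTransGen.refl⟩
      | tail hab hbc ih =>
        rename_i b c
        obtain ⟨m, n, rfl, hr⟩ := ih
        obtain ⟨c1 | c1, c2 | c2⟩ := c
        · simp [sumT] at hbc
        · exact ⟨c1, c2, rfl, hr.tail hbc⟩
        · simp [sumT] at hbc
        · simp [sumT] at hbc
    obtain ⟨m, n, he, hr⟩ := this _ hst
    simp only [Prod.mk.injEq] at he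
    obtain ⟨rfl, rfl⟩ := he
    exact ⟨m, n, Relation.EqvGen.rel _ _ hz, hr⟩
  have ext : ∀ m n m', E (Sum.inl m) (Sum.inr n) →
      Relation.ReflTransGen (fun a b : M => 0 < τ a b) m m' →
      ∃ n', E (Sum.inl m') (Sum.inr n') ∧ Relation.ReflTransGen r (m, n) (m', n') := by
    intro m n m' he hr
    induction hr with
    | refl => exact ⟨n, he, Relation.ReflTransGen.refl⟩
    | tail _ hbc ih =>
      obtain ⟨n1, h1, h2⟩ := ih
      obtain ⟨n2, h3, h4⟩ := liftR _ _ _ h1 hbc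
      exact ⟨n2, h4, h2.tail ⟨hbc, h3, Elabel _ _ h1⟩⟩
  obtain ⟨m1, n1, he1, hr1⟩ := step1
  obtain ⟨V, ⟨v0, hv0⟩, hVc, hVs, hVr⟩ := exists_bscc (fun a b : M => 0 < τ a b) m1
  obtain ⟨n2, he2, hr2⟩ := ext m1 n1 v0 he1 (hVr v0 hv0)
  obtain ⟨h, P, hP0, hPh, hPs⟩ := rtg_path (hr1.trans hr2)
  refine ⟨V, ⟨v0, hv0⟩, hVc, hVs, h, fun i => (P i).1, by simp [hP0], fun i hi => (hPs i hi).1, ?_⟩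
  let W : N → Prop := fun n => ∃ v ∈ V, E (Sum.inl v) (Sum.inr n)
  have hWh : W (P h).2 := by
    rw [hPh]
    exact ⟨v0, hv0, he2⟩
  have hex : ∃ i, W (P i).2 := ⟨h, hWh⟩
  set q := Nat.find hex with hq
  have hqh : q ≤ h := Nat.find_min' hex hWh
  have hWq : ∀ i, q ≤ i → i ≤ h → W (P i).2 := by
    intro i hi
    induction i, hi using Nat.le_induction with
    | base => intro _; exact Nat.find_spec hex
    | succ i hi ih =>
      intro hle
      obtain ⟨v, hv, he⟩ := ih (by omega)
      obtain ⟨v', h1, h2⟩ := liftL _ _ _ he (hPs i (by omega)).2.1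
      exact ⟨v', hVc v hv v' h1, h2⟩
  refine ⟨q, hqh, ?_, ?_⟩
  · have hlabP : ∀ i ≤ h, ℓ (P i).1 = α (P i).2 := by
      intro i hi
      rcases hi.lt_or_eq with hi | rfl
      · exact (hPs i hi).2.2
      · rw [hPh]
        exact Elabel _ _ he2
    have hch : ∀ i, ∃ v, q ≤ i → i ≤ h → v ∈ V ∧ E (Sum.inl v) (Sum.inr (P i).2) := by
      intro i
      by_cases hi : q ≤ i ∧ i ≤ h
      · obtain ⟨v, hv, he⟩ := hWq i hi.1 hi.2
        exact ⟨v, fun _ _ => ⟨hv, he⟩⟩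
      · exact ⟨v0, fun h1 h2 => (hi ⟨h1, h2⟩).elim⟩
    choose p' hp' using hch
    refine ⟨p', fun i h1 h2 => (hp' i h1 h2).1, ?_, ?_, ?_⟩
    · apply Einj
      have := (hp' h hqh le_rfl).2
      simp only
      rw [hPh] at this ⊢
      exact Etrans this (Esymm he2)
    · intro i h1 h2
      obtain ⟨v', h3, h4⟩ := liftL _ _ _ (hp' i h1 h2.le).2 (hPs i h2).2.1
      have := Einj _ _ (Etrans h4 (Esymm (hp' (i + 1) (by omega) (by omega)).2))
      rwa [← this]
    · intro i h1 h2
      rw [hlabP i h2]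
      exact Elabel _ _ (hp' i h1 h2).2
  · have hchV : ∀ v, ∃ n, v ∈ V → E (Sum.inl v) (Sum.inr n) := by
      intro v
      by_cases hv : v ∈ V
      · obtain ⟨n, hn, _⟩ := ext v0 n2 v he2 (hVs v0 hv0 v hv)
        exact ⟨n, fun _ => hn⟩
      · exact ⟨n0, fun h => (hv h).elim⟩
    choose g hg using hchV
    have c1 : V.card ≤ (Finset.univ.filter fun n => W n).card := by
      apply Finset.card_le_card_of_injOn g
      · intro v hv
        simpa using ⟨v, hv, hg v hv⟩
      · intro v hv w hw hvw
        apply Einj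
        have h1 := hg v hv
        rw [hvw] at h1
        exact Etrans h1 (Esymm (hg w hw))
    have c2 : ((Finset.range q).image (fun i => ℓ (P i).1)).card
        ≤ (Finset.univ.filter fun n => ¬ W n).card := by
      refine le_trans (Finset.card_le_card ?_) (Finset.card_image_le (f := α))
      intro l hl
      obtain ⟨i, hi, rfl⟩ := Finset.mem_image.1 hl
      have hi := Finset.mem_range.1 hi
      refine Finset.mem_image.2 ⟨(P i).2, ?_, ((hPs i (by omega)).2.2).symm⟩
      simpa using Nat.find_min hex hi
    have c3 := Finset.card_filter_add_card_filter_not (s := (Finset.univ : Finset N)) (fun n => W n)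
    rw [Finset.card_univ] at c3
    simp only
    omega

open Classical in
lemma backward {M L : Type*} [Fintype M]
    (τ : M → M → ℝ) (hτ : ∀ m, IsDist (τ m)) (ℓ : M → L)
    (V : Finset M)
    (hVc : ∀ u ∈ V, ∀ v : M, 0 < τ u v → v ∈ V)
    (h : ℕ) (p : ℕ → M) (hp : ∀ i < h, 0 < τ (p i) (p (i + 1)))
    (q : ℕ) (hq : q ≤ h) (p' : ℕ → M)
    (h1 : ∀ i, q ≤ i → i ≤ h → p' i ∈ V)
    (h2 : p' h = p h)
    (h3 : ∀ i, q ≤ i → i < h → 0 < τ (p' i) (p' (i + 1)))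
    (h4 : ∀ i, q ≤ i → i ≤ h → ℓ (p' i) = ℓ (p i))
    (A : Finset L) (hA : A = (Finset.range q).image (fun i => ℓ (p i)))
    (n : ℕ) (hcard : n = A.card + V.card) :
    ∃ (hn : 0 < n) (θ : Fin n → Fin n → ℝ) (α : Fin n → L),
        (∀ i, IsDist (θ i)) ∧
        bdist 1 (sumT τ θ) (sumL ℓ α) (Sum.inl (p 0)) (Sum.inr ⟨0, hn⟩) < 1 := by
  have hAi : ∀ i, i < q → ℓ (p i) ∈ A := by
    intro i hi
    rw [hA]
    exact Finset.mem_image.2 ⟨i, Finset.mem_range.2 hi, rfl⟩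
  have hVh := h1 h hq le_rfl
  have hn : 0 < n := by
    have : 0 < V.card := Finset.card_pos.2 ⟨_, hVh⟩
    omega
  let x : ℕ → A ⊕ V := fun i => if hi : i < q then Sum.inl ⟨ℓ (p i), hAi i hi⟩
    else if hj : i ≤ h then Sum.inr ⟨p' i, h1 i (not_lt.1 hi) hj⟩ else Sum.inr ⟨p' h, hVh⟩
  have hx1 : ∀ i (hi : i < q), x i = Sum.inl ⟨ℓ (p i), hAi i hi⟩ := fun i hi => by simp [x, hi]
  have hx2 : ∀ i (hi : q ≤ i) (hj : i ≤ h), x i = Sum.inr ⟨p' i, h1 i hi hj⟩ := fun i hi hj => by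
    simp [x, not_lt.2 hi, hj]
  obtain ⟨e, he⟩ : ∃ e : (A ⊕ V) ≃ Fin n, e (x 0) = ⟨0, hn⟩ := by
    let e0 : (A ⊕ V) ≃ Fin n := Fintype.equivFinOfCardEq (by simp [hcard])
    exact ⟨e0.trans (Equiv.swap (e0 (x 0)) ⟨0, hn⟩), by simp⟩
  let f : M → Fin n := fun a => if ha : a ∈ V then e (Sum.inr ⟨a, ha⟩) else ⟨0, hn⟩
  have hf : ∀ a (ha : a ∈ V), f a = e (Sum.inr ⟨a, ha⟩) := fun a ha => by simp [f, ha]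
  let θ0 : (A ⊕ V) → Fin n → ℝ := fun s j => match s with
    | Sum.inl _ => 1 / (n : ℝ)
    | Sum.inr v => ∑ a, if j = f a then τ v a else 0
  let α0 : (A ⊕ V) → L := fun s => match s with
    | Sum.inl l => l
    | Sum.inr v => ℓ v
  let θ : Fin n → Fin n → ℝ := fun i => θ0 (e.symm i)
  let α : Fin n → L := fun i => α0 (e.symm i)
  have hn' : (0 : ℝ) < n := by exact_mod_cast hn
  have hθ0 : ∀ s, IsDist (θ0 s) := by
    rintro (l | v)
    · refine ⟨fun j => by simp only [θ0]; positivity, ?_⟩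
      simp only [θ0]
      simp
      field_simp
    · refine ⟨fun j => Finset.sum_nonneg fun a _ => ?_, ?_⟩
      · split_ifs
        · exact (hτ v).1 a
        · exact le_rfl
      · simp only [θ0]
        rw [Finset.sum_comm]
        simp [(hτ v).2]
  have hθ : ∀ i, IsDist (θ i) := fun i => hθ0 _
  refine ⟨hn, θ, α, hθ, ?_⟩
  rw [← he]
  apply path_lt_one hτ hθ h p (fun i => e (x i)) hp
  · intro i hi
    simp only [θ, Equiv.symm_apply_apply]
    by_cases hiq : i < q
    · rw [hx1 i hiq]
      simp only [θ0]
      positivity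
    · push Not at hiq
      rw [hx2 i hiq hi.le, hx2 (i + 1) (by omega) hi, ← hf]
      simp only [θ0]
      refine (h3 i hiq hi).trans_le ?_
      have := Finset.single_le_sum (f := fun a => if f (p' (i + 1)) = f a then τ (p' i) a else 0)
        (fun a _ => by
          split_ifs
          · exact (hτ _).1 a
          · exact le_rfl) (Finset.mem_univ (p' (i + 1)))
      simpa using this
  · intro i hi
    simp only [α, Equiv.symm_apply_apply]
    by_cases hiq : i < q
    · rw [hx1 i hiq]
    · push Not at hiq
      rw [hx2 i hiq hi.le]
      exact (h4 i hiq hi.le).symm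
  · have := push_zero hτ hθ (ℓ := ℓ) (α := α) V hVc f
      (by
        intro v hv
        rw [hf v hv]
        simp [α, α0])
      (by
        intro v hv b
        rw [hf v hv]
        simp [θ, θ0]) (p h) (h2 ▸ hVh)
    rw [hf _ (h2 ▸ hVh)] at this
    rw [hx2 h hq le_rfl]
    simp only [h2]
    rw [this]
    exact one_pos

open Classical in
theorem stmt18 {M L : Type*} [Fintype M] [Nonempty M] (k : ℕ) (hk : 1 ≤ k)
    (τ : M → M → ℝ) (hτ : ∀ m, IsDist (τ m)) (ℓ : M → L) (m0 : M)
    (hmin : ∀ R : M → M → Prop, Equivalence R →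
      (∀ m n, R m n → ℓ m = ℓ n ∧
        ∀ u : M, ∑ v : M, Set.indicator {w : M | R u w} (τ m) v
          = ∑ v : M, Set.indicator {w : M | R u w} (τ n) v) →
      ∀ m n, R m n → m = n) :
    (∃ (n : ℕ) (hn : 0 < n), n ≤ k ∧
      ∃ (θ : Fin n → Fin n → ℝ) (α : Fin n → L),
        (∀ i, IsDist (θ i)) ∧
        bdist 1 (sumT τ θ) (sumL ℓ α) (Sum.inl m0) (Sum.inr ⟨0, hn⟩) < 1)
    ↔
    (∃ V : Finset M, V.Nonempty ∧
      (∀ u ∈ V, ∀ v : M, 0 < τ u v → v ∈ V) ∧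
      (∀ u ∈ V, ∀ v ∈ V, Relation.ReflTransGen (fun a b : M => 0 < τ a b) u v) ∧
      ∃ (h : ℕ) (p : ℕ → M), p 0 = m0 ∧ (∀ i < h, 0 < τ (p i) (p (i + 1))) ∧
        ∃ q ≤ h,
          (∃ p' : ℕ → M,
            (∀ i, q ≤ i → i ≤ h → p' i ∈ V) ∧
            p' h = p h ∧
            (∀ i, q ≤ i → i < h → 0 < τ (p' i) (p' (i + 1))) ∧
            (∀ i, q ≤ i → i ≤ h → ℓ (p' i) = ℓ (p i))) ∧
          ((Finset.range q).image (fun i => ℓ (p i))).card + V.card ≤ k) := by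
  constructor
  · rintro ⟨n, hn, hnk, θ, α, hθ, hlt⟩
    exact forward k τ hτ ℓ m0 hmin (N := Fin n) (by simpa using hnk) θ α hθ _ hlt
  · rintro ⟨V, _, hVc, _, h, p, rfl, hp, q, hq, ⟨p', h1, h2, h3, h4⟩, hc⟩
    obtain ⟨hn, θ, α, hθ, hlt⟩ := backward τ hτ ℓ V hVc h p hp q hq p' h1 h2 h3 h4 _ rfl _ rfl
    exact ⟨_, hn, hc, θ, α, hθ, hlt⟩
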